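/- arXiv:2507.16133 — 2 statements merged into one kernel-verified Lean document; each statement's English description precedes it below -/
import Mathlib

section
/- Let n ≥ 2 and let Λ be an n-dimensional isotropic subspace of ℂ^{2n+1}. Then for every admissible subset S ⊆ [n] ∪ [n]̄ one has rk_Λ(S) = max_{S' ∈ 𝒟(Λ)} |S' ∩ S|. -/
/-!
The coordinate functionals on `Λ` represent a matroid on `[n] ∪ [n]̄` with rank function `rk_Λ`,
and `𝒟(Λ)` consists of its admissible bases. An intersection `S' ∩ S` with `S' ∈ 𝒟(Λ)` is
independent, which bounds its size by `rk_Λ(S)`. For equality, extend a maximal independent subset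
of `S` to a maximal admissible independent set `B`; it remains to see that `B` is a basis.

Let `y ∈ Λ` vanish on `B`. By maximality every coordinate `p` with `p̄ ∉ B` is a linear combination
of those in `B`, so `y_p = 0`: the vector `y` is supported on `0` and the conjugates of `B`. Hence
`0 = y·y = 2y₀²`, and for `z ∈ Λ` the equation `y·z = 0` reads `∑_{b ∈ B} y_{b̄} z_b = 0`. This is a
linear relation between independent functionals, so all `y_{b̄}` vanish too and `y = 0`.
-/

open scoped BigOperators

/-- Index set for the coordinates of `ℂ^{2n+1}`: `none` is the coordinate `0`,
`some (q, false)` is the coordinate `q+1 ∈ [n]`, and `some (q, true)` is the barred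
coordinate `(q+1)̄ ∈ [n]̄`. -/
abbrev Idx (n : ℕ) := Option (Fin n × Bool)

/-- The nondegenerate symmetric bilinear form
`y·z = 2 y₀ z₀ + Σ_q (y_q z_{q̄} + y_{q̄} z_q)` on `ℂ^{2n+1}`. -/
noncomputable def bform (n : ℕ) (y z : Idx n → ℂ) : ℂ :=
  2 * y none * z none +
    ∑ q : Fin n, (y (some (q, false)) * z (some (q, true)) +
      y (some (q, true)) * z (some (q, false)))

/-- A subspace is isotropic if the bilinear form vanishes identically on it. -/
def IsIsotropic (n : ℕ) (Λ : Submodule ℂ (Idx n → ℂ)) : Prop :=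
  ∀ y ∈ Λ, ∀ z ∈ Λ, bform n y z = 0

/-- `H_S`: the coordinate subspace of vectors whose coordinates indexed by `S` vanish. -/
noncomputable def coordSub (n : ℕ) (S : Set (Idx n)) : Submodule ℂ (Idx n → ℂ) where
  carrier := {v | ∀ i ∈ S, v i = 0}
  add_mem' := by
    intro a b ha hb i hi
    simp only [Pi.add_apply, ha i hi, hb i hi, add_zero]
  zero_mem' := by intro i hi; rfl
  smul_mem' := by
    intro c a ha i hi
    simp only [Pi.smul_apply, ha i hi, smul_zero]

/-- `rk_Λ(S) = n − dim(Λ ∩ H_S)`. -/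
noncomputable def rk (n : ℕ) (Λ : Submodule ℂ (Idx n → ℂ)) (S : Set (Idx n)) : ℕ :=
  n - Module.finrank ℂ ↥(Λ ⊓ coordSub n S)

/-- The set of coordinates in `[n] ∪ [n]̄` corresponding to a finite set of pairs. -/
def finIdx (n : ℕ) (S : Finset (Fin n × Bool)) : Set (Idx n) :=
  (fun p => (some p : Idx n)) '' ↑S

/-- A subset `S ⊆ [n] ∪ [n]̄` is admissible if it contains no pair `{q, q̄}`. -/
def Admissible (n : ℕ) (S : Finset (Fin n × Bool)) : Prop :=
  ∀ q : Fin n, ¬((q, false) ∈ S ∧ (q, true) ∈ S)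

/-- `rk_Λ(S)` for `S ⊆ [n] ∪ [n]̄`. -/
noncomputable def rkF (n : ℕ) (Λ : Submodule ℂ (Idx n → ℂ)) (S : Finset (Fin n × Bool)) : ℕ :=
  rk n Λ (finIdx n S)

/-- `g_Λ(S) = rk_Λ(S) − |S ∩ [n]̄|`. -/
noncomputable def gF (n : ℕ) (Λ : Submodule ℂ (Idx n → ℂ)) (S : Finset (Fin n × Bool)) : ℤ :=
  (rkF n Λ S : ℤ) - ((S.filter fun p => p.2 = true).card : ℤ)

/-- The delta-matroid `𝒟(Λ)`: maximal admissible subsets of full rank. -/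
def deltaMatroid (n : ℕ) (Λ : Submodule ℂ (Idx n → ℂ)) : Set (Finset (Fin n × Bool)) :=
  {S | Admissible n S ∧ S.card = n ∧ rkF n Λ S = n}

/-- `x(S) = Σ_{q ∈ S ∩ [n]} x_q − Σ_{q̄ ∈ S ∩ [n]̄} x_q`. -/
def xval (n : ℕ) (x : Fin n → ℝ) (S : Finset (Fin n × Bool)) : ℝ :=
  ∑ p ∈ S.filter (fun p => p.2 = false), x p.1 -
    ∑ p ∈ S.filter (fun p => p.2 = true), x p.1

/-- The polytope `𝒫(Λ)` cut out by the inequalities `x(S) ≤ g_Λ(S)` over admissible `S`. -/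
def polytopeP (n : ℕ) (Λ : Submodule ℂ (Idx n → ℂ)) : Set (Fin n → ℝ) :=
  {x | ∀ S : Finset (Fin n × Bool), Admissible n S → xval n x S ≤ (gF n Λ S : ℝ)}

/-- `χ(S')`: the 0–1 vector whose `q`-th coordinate is `1` exactly when `q ∈ S' ∩ [n]`. -/
def chi (n : ℕ) (S : Finset (Fin n × Bool)) : Fin n → ℝ :=
  fun q => if (q, false) ∈ S then 1 else 0

/-- `S₁ ⊔ S₂ = {a ∈ S₁ ∪ S₂ : ā ∉ S₁ ∪ S₂}`. -/
def sqcup (n : ℕ) (S₁ S₂ : Finset (Fin n × Bool)) : Finset (Fin n × Bool) :=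
  (S₁ ∪ S₂).filter (fun p => (p.1, !p.2) ∉ S₁ ∪ S₂)

open Module

section VectorFamilies

variable {K V ι : Type*} [DivisionRing K] [AddCommGroup V] [Module K V]

lemma linearIndepOn_iff_finrank_image_eq_card {v : ι → V} {B : Finset ι} :
    LinearIndepOn K v (B : Set ι) ↔ Set.finrank K (v '' B) = B.card := by
  rw [Set.image_eq_range, eq_comm, ← Fintype.card_coe]
  exact linearIndependent_iff_card_eq_finrank_span

lemma card_inter_le_finrank_image [DecidableEq ι] {v : ι → V} {B : Finset ι}
    (hB : LinearIndepOn K v (B : Set ι)) (S : Finset ι) :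
    (B ∩ S).card ≤ Set.finrank K (v '' S) := by
  have : FiniteDimensional K (Submodule.span K (v '' S)) :=
    FiniteDimensional.span_of_finite K (S.finite_toSet.image v)
  rw [← linearIndepOn_iff_finrank_image_eq_card.1
    (hB.mono (Finset.coe_subset.2 Finset.inter_subset_left))]
  exact Submodule.finrank_mono <| Submodule.span_mono <|
    Set.image_mono (Finset.coe_subset.2 Finset.inter_subset_right)

variable (K) in
lemma exists_linearIndepOn_card_eq_finrank_image (v : ι → V) (S : Finset ι) :
    ∃ B ⊆ S, LinearIndepOn K v (B : Set ι) ∧ B.card = Set.finrank K (v '' S) := by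
  obtain ⟨B, hBS, -, hspan, hB⟩ :=
    exists_linearIndepOn_extension (linearIndepOn_empty K v) (Set.empty_subset (S : Set ι))
  lift B to Finset ι using S.finite_toSet.subset hBS
  refine ⟨B, Finset.coe_subset.1 hBS, hB, ?_⟩
  rw [← linearIndepOn_iff_finrank_image_eq_card.1 hB, Set.finrank, Set.finrank,
    (Submodule.span_mono (Set.image_mono hBS)).antisymm (Submodule.span_le.2 hspan)]

end VectorFamilies

lemma mem_dualCoannihilator_span_image {R M ι : Type*} [CommSemiring R] [AddCommMonoid M]
    [Module R M] {φ : ι → Dual R M} {s : Set ι} {v : M} :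
    v ∈ (Submodule.span R (φ '' s)).dualCoannihilator ↔ ∀ i ∈ s, φ i v = 0 := by
  rw [← SetLike.mem_coe, Submodule.coe_dualCoannihilator_span]
  exact Set.forall_mem_image

lemma card_eq_finrank_of_linearIndepOn_dual {K V ι : Type*} [Field K] [AddCommGroup V]
    [Module K V] [FiniteDimensional K V] {φ : ι → Dual K V} {B : Finset ι}
    (hB : LinearIndepOn K φ (B : Set ι))
    (hker : ∀ v, (∀ b ∈ B, φ b v = 0) → v = 0) : B.card = finrank K V := by
  have hbot : (Submodule.span K (φ '' B)).dualCoannihilator = ⊥ :=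
    (Submodule.eq_bot_iff _).2 fun v hv => hker v (mem_dualCoannihilator_span_image.1 hv)
  rw [← linearIndepOn_iff_finrank_image_eq_card.1 hB, Set.finrank,
    ← Subspace.finrank_add_finrank_dualCoannihilator_eq (Submodule.span K (φ '' B)), hbot,
    finrank_bot, add_zero]

section IsotropicSubspace

variable {K ι : Type*} [Field K]

/-- The conjugation `q ↔ q̄` on `[n] ∪ [n]̄`. -/
def bar (p : ι × Bool) : ι × Bool := (p.1, !p.2)

@[simp] lemma bar_bar (p : ι × Bool) : bar (bar p) = p := by simp [bar]

lemma eq_or_eq_bar_of_fst_eq {p r : ι × Bool} (h : p.1 = r.1) : p = r ∨ p = bar r := by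
  obtain ⟨q, a⟩ := p
  obtain ⟨_, b⟩ := r
  obtain rfl : q = _ := h
  cases a <;> cases b <;> simp [bar]

/-- The form `y·z = 2y₀z₀ + ∑_q (y_q z_{q̄} + y_{q̄} z_q)` over an arbitrary field, summed over all
elements of `[n] ∪ [n]̄` instead of pairs. -/
def splitForm [Fintype ι] (y z : Option (ι × Bool) → K) : K :=
  2 * y none * z none + ∑ p, y (some (bar p)) * z (some p)

/-- The coordinate `y ↦ y_p` for `p ∈ [n] ∪ [n]̄`, as a functional on `Λ`. -/
def coordDual (Λ : Submodule K (Option (ι × Bool) → K)) (p : ι × Bool) : Dual K Λ :=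
  LinearMap.proj (some p) ∘ₗ Λ.subtype

@[simp] lemma coordDual_apply (Λ : Submodule K (Option (ι × Bool) → K)) (p : ι × Bool) (y : Λ) :
    coordDual Λ p y = y.1 (some p) := rfl

/-- Admissible sets of coordinates that are linearly independent on `Λ`. Admissibility is encoded
as injectivity of the map `q, q̄ ↦ q`. -/
def AdmissibleIndep (Λ : Submodule K (Option (ι × Bool) → K)) (B : Finset (ι × Bool)) : Prop :=
  Set.InjOn Prod.fst (B : Set (ι × Bool)) ∧ LinearIndepOn K (coordDual Λ) (B : Set (ι × Bool))

/-- The admissible bases of the matroid of coordinate functionals on `Λ`, which form `𝒟(Λ)` when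
`Λ` has the maximal dimension `n`. -/
def admissibleBases (Λ : Submodule K (Option (ι × Bool) → K)) : Set (Finset (ι × Bool)) :=
  {B | AdmissibleIndep Λ B ∧ B.card = finrank K Λ}

variable {Λ : Submodule K (Option (ι × Bool) → K)} {B : Finset (ι × Bool)}

lemma coordDual_mem_span_of_maximal (hB : Maximal (AdmissibleIndep Λ) B) {p : ι × Bool}
    (hp : bar p ∉ B) : coordDual Λ p ∈ Submodule.span K (coordDual Λ '' B) := by
  classical
  by_contra hspan
  have hpB : p ∉ B := fun h => hspan (Submodule.subset_span (Set.mem_image_of_mem _ h))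
  have hfst : p.1 ∉ Prod.fst '' (B : Set (ι × Bool)) := by
    rintro ⟨r, hr, hrp⟩
    rcases eq_or_eq_bar_of_fst_eq hrp with rfl | rfl
    exacts [hpB hr, hp hr]
  have hinsert : AdmissibleIndep Λ (insert p B) := by
    rw [AdmissibleIndep, Finset.coe_insert, Set.injOn_insert hpB, linearIndepOn_insert hpB]
    exact ⟨⟨hB.prop.1, hfst⟩, hB.prop.2, hspan⟩
  exact hpB (hB.le_of_ge hinsert (Finset.subset_insert p B) (Finset.mem_insert_self p B))

lemma apply_eq_zero_of_maximal (hB : Maximal (AdmissibleIndep Λ) B) {y : Λ}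
    (hy : ∀ b ∈ B, y.1 (some b) = 0) {p : ι × Bool} (hp : bar p ∉ B) : y.1 (some p) = 0 := by
  have hmem : y ∈ (Submodule.span K (coordDual Λ '' B)).dualCoannihilator :=
    mem_dualCoannihilator_span_image.2 hy
  exact (Submodule.mem_dualCoannihilator y).1 hmem _ (coordDual_mem_span_of_maximal hB hp)

variable [Fintype ι]

lemma splitForm_eq_of_forall_bar_notMem {y : Option (ι × Bool) → K}
    (hy : ∀ p, bar p ∉ B → y (some p) = 0) (z : Option (ι × Bool) → K) :
    splitForm y z = 2 * y none * z none + ∑ b ∈ B, y (some (bar b)) * z (some b) := by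
  have hterm : ∀ p ∉ B, y (some (bar p)) * z (some p) = 0 := fun p hp => by
    rw [hy (bar p) (by rwa [bar_bar]), zero_mul]
  rw [splitForm, Finset.sum_subset B.subset_univ fun p _ hp => hterm p hp]

lemma eq_zero_of_maximal [NeZero (2 : K)] (hiso : ∀ y ∈ Λ, ∀ z ∈ Λ, splitForm y z = 0)
    (hB : Maximal (AdmissibleIndep Λ) B) (y : Λ) (hy : ∀ b ∈ B, y.1 (some b) = 0) : y = 0 := by
  have hsupp : ∀ p, bar p ∉ B → y.1 (some p) = 0 := fun _ => apply_eq_zero_of_maximal hB hy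
  have hform : ∀ z : Λ, 2 * y.1 none * z.1 none + ∑ b ∈ B, y.1 (some (bar b)) * z.1 (some b) = 0 :=
    fun z => (splitForm_eq_of_forall_bar_notMem hsupp z).symm.trans (hiso y y.2 z z.2)
  have hzero : y.1 none = 0 := by
    have hself := hform y
    rw [Finset.sum_eq_zero fun b hb => mul_eq_zero_of_right _ (hy b hb)] at hself
    simpa [two_ne_zero] using hself
  have hrel : ∑ b ∈ B, y.1 (some (bar b)) • coordDual Λ b = 0 := by
    ext z
    simpa [hzero] using hform z
  have hbar : ∀ b ∈ B, y.1 (some (bar b)) = 0 :=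
    linearIndepOn_finset_iff.1 hB.prop.2 _ hrel
  ext (_ | p)
  · exact hzero
  · by_cases hp : bar p ∈ B
    · simpa using hbar _ hp
    · exact hsupp p hp

lemma exists_admissibleBases_superset [NeZero (2 : K)]
    (hiso : ∀ y ∈ Λ, ∀ z ∈ Λ, splitForm y z = 0) (hB : AdmissibleIndep Λ B) :
    ∃ S' ∈ admissibleBases Λ, B ⊆ S' := by
  obtain ⟨S', hBS', hS'⟩ := Finite.exists_le_maximal hB
  have hcard : S'.card = finrank K Λ :=
    card_eq_finrank_of_linearIndepOn_dual hS'.prop.2 (eq_zero_of_maximal hiso hS')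
  exact ⟨S', ⟨hS'.prop, hcard⟩, hBS'⟩

end IsotropicSubspace

/-- The rank of `S` is the dimension of the span of its coordinate functionals, which for
`dim Λ < n` differs from `n − dim(Λ ∩ H_S)`. -/
theorem stmt4_general {K ι : Type*} [Field K] [NeZero (2 : K)] [Fintype ι] [DecidableEq ι]
    {Λ : Submodule K (Option (ι × Bool) → K)}
    (hiso : ∀ y ∈ Λ, ∀ z ∈ Λ, splitForm y z = 0) {S : Finset (ι × Bool)}
    (hS : Set.InjOn Prod.fst (S : Set (ι × Bool))) :
    (∃ S' ∈ admissibleBases Λ, (S' ∩ S).card = Set.finrank K (coordDual Λ '' S)) ∧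
      (∀ S' ∈ admissibleBases Λ, (S' ∩ S).card ≤ Set.finrank K (coordDual Λ '' S)) := by
  have hle : ∀ S' ∈ admissibleBases Λ, (S' ∩ S).card ≤ Set.finrank K (coordDual Λ '' S) :=
    fun S' hS' => card_inter_le_finrank_image hS'.1.2 S
  obtain ⟨B, hBS, hB, hcard⟩ := exists_linearIndepOn_card_eq_finrank_image K (coordDual Λ) S
  obtain ⟨S', hS', hBS'⟩ := exists_admissibleBases_superset hiso
    ⟨hS.mono (Finset.coe_subset.2 hBS), hB⟩
  refine ⟨⟨S', hS', (hle S' hS').antisymm ?_⟩, hle⟩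
  exact hcard.symm.trans_le (Finset.card_le_card (Finset.subset_inter hBS' hBS))

section ComplexCoordinates

variable {n : ℕ}

lemma bform_eq_splitForm (y z : Idx n → ℂ) : bform n y z = splitForm y z := by
  simp [bform, splitForm, bar, Fintype.sum_prod_type]

lemma admissible_iff_injOn_fst {S : Finset (Fin n × Bool)} :
    Admissible n S ↔ Set.InjOn Prod.fst (S : Set (Fin n × Bool)) := by
  constructor
  · rintro hS ⟨q, a⟩ hp ⟨_, b⟩ hr rfl
    have := hS q
    cases a <;> cases b <;> simp_all
  · rintro hS q ⟨h, h'⟩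
    simpa using hS h h' rfl

variable {Λ : Submodule ℂ (Idx n → ℂ)}

lemma inf_coordSub_finIdx_eq_map (S : Finset (Fin n × Bool)) :
    Λ ⊓ coordSub n (finIdx n S) =
      (Submodule.span ℂ (coordDual Λ '' S)).dualCoannihilator.map Λ.subtype := by
  ext v
  have hcoord : v ∈ coordSub n (finIdx n S) ↔ ∀ p ∈ S, v (some p) = 0 := Set.forall_mem_image
  rw [Submodule.mem_inf, hcoord, Submodule.mem_map]
  constructor
  · rintro ⟨hv, hvS⟩
    exact ⟨⟨v, hv⟩, mem_dualCoannihilator_span_image.2 hvS, rfl⟩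
  · rintro ⟨y, hy, rfl⟩
    exact ⟨y.2, mem_dualCoannihilator_span_image.1 hy⟩

lemma rkF_eq_finrank_image (hΛ : finrank ℂ Λ = n) (S : Finset (Fin n × Bool)) :
    rkF n Λ S = Set.finrank ℂ (coordDual Λ '' S) := by
  have hdim := Subspace.finrank_add_finrank_dualCoannihilator_eq
    (Submodule.span ℂ (coordDual Λ '' S))
  rw [rkF, rk, inf_coordSub_finIdx_eq_map, Submodule.finrank_map_subtype_eq]
  exact (Nat.eq_sub_of_add_eq (hdim.trans hΛ)).symm

lemma deltaMatroid_eq_admissibleBases (hΛ : finrank ℂ Λ = n) :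
    deltaMatroid n Λ = admissibleBases Λ := by
  ext S
  simp only [deltaMatroid, admissibleBases, AdmissibleIndep, Set.mem_ofPred_eq, hΛ,
    admissible_iff_injOn_fst, rkF_eq_finrank_image hΛ, linearIndepOn_iff_finrank_image_eq_card]
  grind

end ComplexCoordinates

theorem stmt4 (n : ℕ) (hn : 2 ≤ n)
    (Λ : Submodule ℂ (Idx n → ℂ)) (hiso : IsIsotropic n Λ)
    (hΛ : Module.finrank ℂ ↥Λ = n)
    (S : Finset (Fin n × Bool)) (hS : Admissible n S) :
    (∃ S' ∈ deltaMatroid n Λ, (S' ∩ S).card = rkF n Λ S) ∧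
      (∀ S' ∈ deltaMatroid n Λ, (S' ∩ S).card ≤ rkF n Λ S) := by
  simp only [deltaMatroid_eq_admissibleBases hΛ, rkF_eq_finrank_image hΛ]
  exact stmt4_general (by simpa only [IsIsotropic, bform_eq_splitForm] using hiso)
    (admissible_iff_injOn_fst.1 hS)
end

section
/- Let n ≥ 2, let Λ be an n-dimensional isotropic subspace of ℂ^{2n+1}, and let x be a vertex (extreme point) of the polytope 𝒫(Λ). Then there exists a chain of admissible subsets S₁ ⊂ S₂ ⊂ ⋯ ⊂ S_n ⊆ [n] ∪ [n]̄ with |S_j| = j for each j, such that x(S_j) = g_Λ(S_j) for every j = 1,…,n. -/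
/-!
The function `g_Λ` is bisubmodular: `g(S ∩ T) + g(S ⊔ T) ≤ g(S) + g(T)`. Ordinary submodularity of
the rank compares `S`, `T` with `S ∩ T`, `S ∪ T`, and passing from `S ∪ T` to `S ⊔ T` removes
pairs `{q, q̄}`. Here isotropy forces the rank to drop: with `W = H_{S ∪ T}` and
`H = H_{S ⊔ T}`, the radical `W ∩ Wᗮ` is `Hᗮ`, so `Λ ∩ W` is isotropic modulo `Hᗮ` and has at most
half the available dimension there, while `Λ ∩ H` is large because `dim Λ = n`.

The map `S ↦ x(S)` is modular for `∩` and `⊔`, so the tight admissible sets are closed under both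
operations. As `x` is an extreme point, a direction `d` with `d(S) = 0` for every tight `S` is zero.
Let `T` be a maximal tight set. For every tight `S` the set `T ⊔ (S ⊔ T)` is tight and contains `T`,
so `S` is supported on the support of `T`, which is therefore all of `[n]`. Moreover
`d(S) = d(S ∩ T) - d(T) + d(S ⊔ T)` with `S ⊔ T ⊆ T`, so already the tight subsets of `T` detect
every direction; in particular they separate the points of `T`. They form a lattice of sets
containing `∅` and `T`, and separation of points makes each of its covering steps add one element.
-/

open scoped BigOperators

section Isotropic

open Module LinearMap.BilinForm

variable {K V : Type*} [Field K] [AddCommGroup V] [Module K V] {B : LinearMap.BilinForm K V}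
  {A H L W : Submodule K V}

theorem le_orthogonal_comm (hB : B.IsRefl) : A ≤ B.orthogonal W ↔ W ≤ B.orthogonal A :=
  ⟨fun h => (le_orthogonal_orthogonal hB).trans (B.orthogonal_le h),
    fun h => (le_orthogonal_orthogonal hB).trans (B.orthogonal_le h)⟩

variable [FiniteDimensional K V]

theorem finrank_add_finrank_add_finrank_inf_orthogonal_le (hB : B.IsRefl) (hnd : B.Nondegenerate)
    (hL : L ≤ B.orthogonal L) (H : Submodule K V) :
    finrank K L + finrank K H + finrank K ↥(L ⊓ B.orthogonal H) ≤
      finrank K V + finrank K ↥(L ⊓ H) := by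
  have hsup : L ⊔ H ≤ B.orthogonal (L ⊓ B.orthogonal H) :=
    sup_le (hL.trans (B.orthogonal_le inf_le_left)) ((le_orthogonal_comm hB).1 inf_le_right)
  have hle := Submodule.finrank_mono hsup
  have hsum := Submodule.finrank_sup_add_finrank_inf_eq L H
  have horth := finrank_orthogonal hnd (L ⊓ B.orthogonal H)
  have hfin := Submodule.finrank_le (L ⊓ B.orthogonal H)
  lia

-- Modulo the radical `W ⊓ Wᗮ`, the image of `A` is isotropic in a nondegenerate space, so it has at
-- most half its dimension.
theorem two_mul_finrank_add_finrank_inf_orthogonal_le (hB : B.IsRefl) (hA : A ≤ B.orthogonal A)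
    (hAW : A ≤ W) :
    2 * finrank K A + finrank K ↥(W ⊓ B.orthogonal W) ≤
      finrank K W + 2 * finrank K ↥(A ⊓ B.orthogonal W) := by
  set R := W ⊓ B.orthogonal W
  have hARW : A ⊔ R ≤ W := sup_le hAW inf_le_left
  have hARA : A ⊔ R ≤ B.orthogonal A := sup_le hA (inf_le_right.trans (B.orthogonal_le hAW))
  have hAR : A ⊓ R = A ⊓ B.orthogonal W := by
    rw [← inf_assoc, inf_eq_left.2 hAW]
  have hle := Submodule.finrank_mono
    (sup_le ((le_orthogonal_comm hB).1 hARA) (B.orthogonal_le hARW))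
  have hrad := Submodule.finrank_mono (inf_le_inf_right (B.orthogonal ⊤) hARW)
  have hsumR := Submodule.finrank_sup_add_finrank_inf_eq A R
  have hsumW := Submodule.finrank_sup_add_finrank_inf_eq A (B.orthogonal W)
  have horth := finrank_add_finrank_orthogonal hB (A ⊔ R)
  have horthW := finrank_add_finrank_orthogonal hB W
  rw [hAR] at hsumR
  lia

theorem two_mul_finrank_inf_add_le (hB : B.IsRefl) (hnd : B.Nondegenerate)
    (hL : L ≤ B.orthogonal L) (hWH : W ⊓ B.orthogonal W = B.orthogonal H) :
    2 * finrank K ↥(L ⊓ W) + finrank K H + 2 * finrank K L ≤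
      finrank K V + finrank K W + 2 * finrank K ↥(L ⊓ H) := by
  have hlow := finrank_add_finrank_add_finrank_inf_orthogonal_le hB hnd hL H
  have hup := two_mul_finrank_add_finrank_inf_orthogonal_le (W := W) hB
    (inf_le_left.trans (hL.trans (B.orthogonal_le inf_le_left))) inf_le_right
  have horth := finrank_orthogonal hnd H
  have hfin := Submodule.finrank_le H
  rw [inf_assoc, hWH] at hup
  lia

end Isotropic

section CoordinateSubspaces

open Module

variable {n : ℕ} {Λ : Submodule ℂ (Idx n → ℂ)}

/-- The involution `q ↔ q̄` of the coordinates, which fixes the coordinate `0`. -/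
def barIdx (i : Idx n) : Idx n := i.map fun p => (p.1, !p.2)

theorem barIdx_barIdx (i : Idx n) : barIdx (barIdx i) = i := by
  rcases i with _ | ⟨q, b⟩ <;> simp [barIdx]

/-- The coefficient of `y i * z ī` in the form: `2` for the coordinate `0` and `1` otherwise. -/
def formCoeff (i : Idx n) : ℂ := i.elim 2 fun _ => 1

theorem formCoeff_ne_zero (i : Idx n) : formCoeff i ≠ 0 := by
  cases i <;> simp [formCoeff]

theorem bform_eq_sum (y z : Idx n → ℂ) :
    bform n y z = ∑ i, formCoeff i * (y i * z (barIdx i)) := by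
  simp [bform, formCoeff, barIdx, Fintype.sum_option, Fintype.sum_prod_type, mul_assoc, add_comm]

theorem bform_comm (y z : Idx n → ℂ) : bform n y z = bform n z y :=
  congrArg₂ (· + ·) (by ring) (Finset.sum_congr rfl fun q _ => by ring)

theorem bform_single_left (i : Idx n) (z : Idx n → ℂ) :
    bform n (Pi.single i 1) z = formCoeff i * z (barIdx i) := by
  simp [bform_eq_sum, Pi.single_apply]

/-- The form `y·z` as a Mathlib bilinear form, which gives access to orthogonal complements. -/
noncomputable def bilin (n : ℕ) : LinearMap.BilinForm ℂ (Idx n → ℂ) :=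
  LinearMap.mk₂ ℂ (bform n)
    (fun y y' z => by simp [bform_eq_sum, add_mul, mul_add, Finset.sum_add_distrib])
    (fun c y z => by
      simp [bform_eq_sum, Finset.mul_sum, mul_left_comm, mul_assoc, -Fintype.sum_option])
    (fun y z z' => by simp [bform_eq_sum, mul_add, Finset.sum_add_distrib])
    (fun c y z => by simp [bform_eq_sum, Finset.mul_sum, mul_left_comm, -Fintype.sum_option])

theorem bilin_apply (y z : Idx n → ℂ) : bilin n y z = bform n y z := rfl

theorem isRefl_bilin : (bilin n).IsRefl := fun y z h => by
  rwa [bilin_apply, bform_comm]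

theorem nondegenerate_bilin : (bilin n).Nondegenerate := by
  refine isRefl_bilin.nondegenerate_iff_separatingRight.2 fun z hz => funext fun i => ?_
  have h := hz (Pi.single (barIdx i) 1)
  rwa [bilin_apply, bform_single_left, barIdx_barIdx, mul_eq_zero_iff_left (formCoeff_ne_zero _)]
    at h

theorem IsIsotropic.le_orthogonal (hΛ : IsIsotropic n Λ) : Λ ≤ (bilin n).orthogonal Λ :=
  fun z hz y hy => hΛ y hy z hz

theorem mem_coordSub {S : Set (Idx n)} {v : Idx n → ℂ} : v ∈ coordSub n S ↔ ∀ i ∈ S, v i = 0 :=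
  Iff.rfl

theorem coordSub_anti {S T : Set (Idx n)} (h : S ⊆ T) : coordSub n T ≤ coordSub n S :=
  fun _ hv i hi => hv i (h hi)

theorem coordSub_union (S T : Set (Idx n)) :
    coordSub n (S ∪ T) = coordSub n S ⊓ coordSub n T := by
  ext v
  simp only [mem_coordSub, Submodule.mem_inf, Set.mem_union, or_imp, forall_and]

theorem finrank_coordSub_add_ncard (S : Set (Idx n)) :
    finrank ℂ (coordSub n S) + S.ncard = 2 * n + 1 := by
  classical
  have hker : coordSub n S = ⨅ i ∈ S, LinearMap.ker (LinearMap.proj i : (Idx n → ℂ) →ₗ[ℂ] ℂ) := by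
    ext v
    simp [mem_coordSub, Submodule.mem_iInf]
  have hcompl : finrank ℂ (coordSub n S) = Sᶜ.ncard := by
    rw [hker, (LinearMap.iInfKerProjEquiv ℂ (fun _ : Idx n => ℂ) (I := Sᶜ) (J := S)
      disjoint_compl_left (by simp)).finrank_eq, finrank_fintype_fun_eq_card,
      Set.ncard_eq_toFinset_card', Set.toFinset_card]
  rw [hcompl, add_comm, Set.ncard_add_ncard_compl]
  simp [mul_comm]

theorem orthogonal_coordSub (S : Set (Idx n)) :
    (bilin n).orthogonal (coordSub n S) = coordSub n {i | barIdx i ∉ S} := by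
  ext z
  rw [LinearMap.BilinForm.mem_orthogonal_iff, mem_coordSub]
  constructor
  · intro h i hi
    have hsingle : Pi.single (barIdx i) 1 ∈ coordSub n S := fun j hj =>
      Pi.single_eq_of_ne (ne_of_mem_of_not_mem hj hi) 1
    have hzero : bform n (Pi.single (barIdx i) 1) z = 0 := h _ hsingle
    rwa [bform_single_left, barIdx_barIdx, mul_eq_zero_iff_left (formCoeff_ne_zero _)] at hzero
  · intro h y hy
    change bform n y z = 0
    rw [bform_eq_sum]
    refine Finset.sum_eq_zero fun i _ => ?_
    by_cases hi : i ∈ S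
    · rw [hy i hi, zero_mul, mul_zero]
    · rw [h (barIdx i) (by simpa [barIdx_barIdx] using hi), mul_zero, mul_zero]

theorem two_mul_finrank_inf_coordSub_union_add_ncard_le (hiso : IsIsotropic n Λ)
    (hΛ : finrank ℂ Λ = n) {U C : Set (Idx n)} (hU : ∀ i ∈ U, barIdx i ∉ U)
    (hC : ∀ i ∈ C, barIdx i ∈ C) (hUC : Disjoint U C) :
    2 * finrank ℂ ↥(Λ ⊓ coordSub n (U ∪ C)) + C.ncard ≤
      2 * finrank ℂ ↥(Λ ⊓ coordSub n U) + 1 := by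
  have hindex : U ∪ C ∪ {i | barIdx i ∉ U ∪ C} = {i | barIdx i ∉ U} := by
    ext i
    have hbarU := hU i
    have hbarC := hC i
    have hbarC' := hC (barIdx i)
    have hdisj : barIdx i ∈ U → barIdx i ∉ C := fun h => Set.disjoint_left.1 hUC h
    rw [barIdx_barIdx] at hbarC'
    simp only [Set.mem_union, Set.mem_ofPred_eq]
    tauto
  have hrad : coordSub n (U ∪ C) ⊓ (bilin n).orthogonal (coordSub n (U ∪ C)) =
      (bilin n).orthogonal (coordSub n U) := by
    rw [orthogonal_coordSub, orthogonal_coordSub, ← coordSub_union, hindex]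
  have hdim := two_mul_finrank_inf_add_le isRefl_bilin nondegenerate_bilin hiso.le_orthogonal hrad
  have hcardU := finrank_coordSub_add_ncard U
  have hcardUC := finrank_coordSub_add_ncard (U ∪ C)
  have hcard := Set.ncard_union_eq hUC
  have hspace : finrank ℂ (Idx n → ℂ) = 2 * n + 1 := by simp [mul_comm]
  rw [hΛ, hspace] at hdim
  lia

theorem finrank_inf_coordSub_add_le (Λ : Submodule ℂ (Idx n → ℂ)) (S T : Set (Idx n)) :
    finrank ℂ ↥(Λ ⊓ coordSub n S) + finrank ℂ ↥(Λ ⊓ coordSub n T) ≤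
      finrank ℂ ↥(Λ ⊓ coordSub n (S ∩ T)) + finrank ℂ ↥(Λ ⊓ coordSub n (S ∪ T)) := by
  have hsup : Λ ⊓ coordSub n S ⊔ Λ ⊓ coordSub n T ≤ Λ ⊓ coordSub n (S ∩ T) :=
    sup_le (inf_le_inf_left _ (coordSub_anti Set.inter_subset_left))
      (inf_le_inf_left _ (coordSub_anti Set.inter_subset_right))
  rw [← Submodule.finrank_sup_add_finrank_inf_eq, coordSub_union, inf_inf_distrib_left Λ]
  exact Nat.add_le_add_right (Submodule.finrank_mono hsup) _

end CoordinateSubspaces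

section SignedSets

variable {n : ℕ} {S T : Finset (Fin n × Bool)}

theorem Admissible.bar_notMem (hS : Admissible n S) {p : Fin n × Bool} (hp : p ∈ S) :
    (p.1, !p.2) ∉ S := by
  rcases p with ⟨q, _ | _⟩
  · exact fun hbar => hS q ⟨hp, hbar⟩
  · exact fun hbar => hS q ⟨hbar, hp⟩

theorem Admissible.mono (hT : Admissible n T) (h : S ⊆ T) : Admissible n S :=
  fun q hq => hT q ⟨h hq.1, h hq.2⟩

theorem mem_sqcup {p : Fin n × Bool} :
    p ∈ sqcup n S T ↔ (p ∈ S ∨ p ∈ T) ∧ (p.1, !p.2) ∉ S ∧ (p.1, !p.2) ∉ T := by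
  simp [sqcup]

theorem admissible_sqcup (S T : Finset (Fin n × Bool)) : Admissible n (sqcup n S T) := by
  rintro q ⟨hq, hbar⟩
  rw [mem_sqcup] at hq hbar
  exact hbar.1.elim hq.2.1 hq.2.2

theorem sqcup_eq_union (h : Admissible n (S ∪ T)) : sqcup n S T = S ∪ T :=
  Finset.filter_true_of_mem fun _ hp => h.bar_notMem hp

theorem sqcup_subset_of_full (hT : ∀ q, ∃ b, (q, b) ∈ T) : sqcup n S T ⊆ T := by
  rintro ⟨q, b⟩ hp
  obtain ⟨c, hc⟩ := hT q
  obtain rfl | rfl := Bool.eq_or_eq_not c b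
  · exact hc
  · exact absurd hc (mem_sqcup.1 hp).2.2

theorem insert_subset_sqcup_sqcup (hS : Admissible n S) (hT : Admissible n T) {q : Fin n}
    {b : Bool} (hq : (q, b) ∈ S) (hqT : ∀ c, (q, c) ∉ T) :
    insert (q, b) T ⊆ sqcup n T (sqcup n S T) := by
  refine Finset.insert_subset ?_ fun p hp => ?_
  · simp [mem_sqcup, hq, hqT, hS.bar_notMem hq]
  · simp [mem_sqcup, hp, hT.bar_notMem hp]

theorem card_eq_of_full (hT : Admissible n T) (hfull : ∀ q, ∃ b, (q, b) ∈ T) : T.card = n := by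
  have hinj : Set.InjOn Prod.fst (T : Set (Fin n × Bool)) := by
    rintro ⟨q, b⟩ hb ⟨r, c⟩ hc (rfl : q = r)
    obtain rfl | rfl := Bool.eq_or_eq_not b c
    · rfl
    · exact absurd hb (hT.bar_notMem hc)
  have himage : T.image Prod.fst = Finset.univ := by
    ext q
    simpa using hfull q
  rw [← Finset.card_image_of_injOn hinj, himage, Finset.card_univ, Fintype.card_fin]

/-- The union of the pairs `{q, q̄}` contained in `S ∪ T`, that is, the part of `S ∪ T` which is
removed in `S ⊔ T`. -/
def conflict (S T : Finset (Fin n × Bool)) : Finset (Fin n × Bool) :=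
  (S ∪ T).filter fun p => (p.1, !p.2) ∈ S ∪ T

theorem bar_mem_conflict {p : Fin n × Bool} (hp : p ∈ conflict S T) :
    (p.1, !p.2) ∈ conflict S T := by
  simpa [conflict, and_comm] using hp

theorem sqcup_union_conflict (S T : Finset (Fin n × Bool)) :
    sqcup n S T ∪ conflict S T = S ∪ T := by
  rw [Finset.union_comm]
  exact Finset.filter_union_filter_not_eq _ _

theorem disjoint_sqcup_conflict (S T : Finset (Fin n × Bool)) :
    Disjoint (sqcup n S T) (conflict S T) :=
  (Finset.disjoint_filter_filter_not _ _ _).symm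

theorem sum_inter_add_sum_sqcup_add_sum_conflict {M : Type*} [AddCommMonoid M]
    (w : Fin n × Bool → M) (S T : Finset (Fin n × Bool)) :
    ∑ p ∈ S ∩ T, w p + ∑ p ∈ sqcup n S T, w p + ∑ p ∈ conflict S T, w p =
      ∑ p ∈ S, w p + ∑ p ∈ T, w p := by
  rw [add_assoc, ← Finset.sum_union (disjoint_sqcup_conflict S T), sqcup_union_conflict, add_comm,
    Finset.sum_union_inter]

theorem sum_conflict_bar {M : Type*} [AddCommMonoid M] (w : Fin n × Bool → M)
    (S T : Finset (Fin n × Bool)) :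
    ∑ p ∈ conflict S T, w (p.1, !p.2) = ∑ p ∈ conflict S T, w p :=
  Finset.sum_nbij' (fun p => (p.1, !p.2)) (fun p => (p.1, !p.2)) (fun _ => bar_mem_conflict)
    (fun _ => bar_mem_conflict) (by simp) (by simp) (by simp)

theorem card_conflict (S T : Finset (Fin n × Bool)) :
    (conflict S T).card = 2 * ((conflict S T).filter fun p => p.2 = true).card := by
  have hbar := sum_conflict_bar (fun p => if p.2 = true then 1 else 0) S T
  have hsplit := Finset.card_filter_add_card_filter_not (s := conflict S T) fun p => p.2 = true
  simp only [← Finset.card_filter, Bool.not_eq_true, Bool.not_eq_true'] at hbar hsplit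
  lia

/-- The summand of `x(S)` at `p`: it is `x_q` for `p = q` and `-x_q` for `p = q̄`. -/
def signedCoord (x : Fin n → ℝ) (p : Fin n × Bool) : ℝ := if p.2 then -x p.1 else x p.1

theorem signedCoord_bar (x : Fin n → ℝ) (p : Fin n × Bool) :
    signedCoord x (p.1, !p.2) = -signedCoord x p := by
  rcases p with ⟨q, _ | _⟩ <;> simp [signedCoord]

theorem Admissible.exists_signedCoord_eq (hT : Admissible n T) (φ : Fin n × Bool → ℝ) :
    ∃ d : Fin n → ℝ, ∀ p ∈ T, signedCoord d p = φ p := by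
  refine ⟨fun q => if (q, false) ∈ T then φ (q, false) else -φ (q, true), ?_⟩
  rintro ⟨q, _ | _⟩ hp
  · simp [signedCoord, hp]
  · have hq : (q, false) ∉ T := hT.bar_notMem hp
    simp [signedCoord, hq]

theorem xval_eq_sum (x : Fin n → ℝ) (S : Finset (Fin n × Bool)) :
    xval n x S = ∑ p ∈ S, signedCoord x p := by
  simp only [xval, Finset.sum_filter, ← Finset.sum_sub_distrib]
  refine Finset.sum_congr rfl ?_
  rintro ⟨q, _ | _⟩ - <;> simp [signedCoord]

theorem xval_inter_add_xval_sqcup (x : Fin n → ℝ) (S T : Finset (Fin n × Bool)) :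
    xval n x (S ∩ T) + xval n x (sqcup n S T) = xval n x S + xval n x T := by
  have hconflict : ∑ p ∈ conflict S T, signedCoord x p = 0 := by
    have hbar := sum_conflict_bar (signedCoord x) S T
    simp only [signedCoord_bar, Finset.sum_neg_distrib] at hbar
    linarith
  simp only [xval_eq_sum]
  rw [← sum_inter_add_sum_sqcup_add_sum_conflict _ S T, hconflict, add_zero]

/-- The linear functional `x ↦ x(S)`, the left-hand side of the inequality of `𝒫(Λ)` at `S`. -/
def xvalDual (S : Finset (Fin n × Bool)) : Module.Dual ℝ (Fin n → ℝ) where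
  toFun x := xval n x S
  map_add' x y := by simp [xval, Finset.sum_add_distrib, add_sub_add_comm]
  map_smul' c x := by simp [xval, Finset.mul_sum, mul_sub]

end SignedSets

section Bisubmodular

variable {n : ℕ} {Λ : Submodule ℂ (Idx n → ℂ)}

/-- Bisubmodularity of a function on the admissible sets: the analogue of submodularity in which
`S ⊔ T` replaces the union. -/
def IsBisubmodular (f : Finset (Fin n × Bool) → ℝ) : Prop :=
  ∀ S T, Admissible n S → Admissible n T → f (S ∩ T) + f (sqcup n S T) ≤ f S + f T

theorem finIdx_inter (S T : Finset (Fin n × Bool)) :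
    finIdx n (S ∩ T) = finIdx n S ∩ finIdx n T := by
  rw [finIdx, Finset.coe_inter]
  exact Set.image_inter (Option.some_injective _)

theorem finIdx_union (S T : Finset (Fin n × Bool)) :
    finIdx n (S ∪ T) = finIdx n S ∪ finIdx n T := by
  rw [finIdx, Finset.coe_union]
  exact Set.image_union ..

theorem two_mul_finrank_inf_coordSub_union_add_card_le (hiso : IsIsotropic n Λ)
    (hΛ : Module.finrank ℂ Λ = n) (S T : Finset (Fin n × Bool)) :
    2 * Module.finrank ℂ ↥(Λ ⊓ coordSub n (finIdx n (S ∪ T))) + (conflict S T).card ≤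
      2 * Module.finrank ℂ ↥(Λ ⊓ coordSub n (finIdx n (sqcup n S T))) + 1 := by
  have hinj := Option.some_injective (Fin n × Bool)
  have hsqcup : ∀ i ∈ finIdx n (sqcup n S T), barIdx i ∉ finIdx n (sqcup n S T) := by
    rintro _ ⟨p, hp, rfl⟩ ⟨r, hr, hrp⟩
    obtain rfl : r = (p.1, !p.2) := hinj hrp
    exact (admissible_sqcup S T).bar_notMem hp hr
  have hconflict : ∀ i ∈ finIdx n (conflict S T), barIdx i ∈ finIdx n (conflict S T) := by
    rintro _ ⟨p, hp, rfl⟩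
    exact ⟨_, bar_mem_conflict hp, rfl⟩
  have hdisj : Disjoint (finIdx n (sqcup n S T)) (finIdx n (conflict S T)) :=
    (Set.disjoint_image_iff hinj).2 (Finset.disjoint_coe.2 (disjoint_sqcup_conflict S T))
  have hcard : (finIdx n (conflict S T)).ncard = (conflict S T).card := by
    rw [finIdx, Set.ncard_image_of_injective _ hinj, Set.ncard_coe_finset]
  rw [← sqcup_union_conflict, finIdx_union, ← hcard]
  exact two_mul_finrank_inf_coordSub_union_add_ncard_le hiso hΛ hsqcup hconflict hdisj

theorem gF_eq (hΛ : Module.finrank ℂ Λ = n) (S : Finset (Fin n × Bool)) :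
    gF n Λ S = n - Module.finrank ℂ ↥(Λ ⊓ coordSub n (finIdx n S)) -
      (S.filter fun p => p.2 = true).card := by
  have hle : Module.finrank ℂ ↥(Λ ⊓ coordSub n (finIdx n S)) ≤ n :=
    (Submodule.finrank_mono inf_le_left).trans_eq hΛ
  rw [gF, rkF, rk, Nat.cast_sub hle]

theorem gF_empty (hΛ : Module.finrank ℂ Λ = n) : gF n Λ ∅ = 0 := by
  have hinf : Λ ⊓ coordSub n (finIdx n ∅) = Λ :=
    inf_eq_left.2 fun v _ => by simp [mem_coordSub, finIdx]
  rw [gF_eq hΛ, hinf, hΛ]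
  simp

-- Submodularity of the rank compares `S` and `T` with `S ∩ T` and `S ∪ T`. Passing from `S ∪ T` to
-- `S ⊔ T` lowers the number of barred elements by exactly the number of conflicting pairs, and the
-- rank by at least as much: the `+ 1` in `hisotropic` is absorbed because `conflict S T` is even.
theorem isBisubmodular_gF (hiso : IsIsotropic n Λ) (hΛ : Module.finrank ℂ Λ = n) :
    IsBisubmodular fun S => (gF n Λ S : ℝ) := by
  intro S T _ _
  have hbarred := sum_inter_add_sum_sqcup_add_sum_conflict
    (fun p => if p.2 = true then 1 else 0) S T
  simp only [← Finset.card_filter] at hbarred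
  have hrank := finrank_inf_coordSub_add_le Λ (finIdx n S) (finIdx n T)
  rw [← finIdx_inter, ← finIdx_union] at hrank
  have hisotropic := two_mul_finrank_inf_coordSub_union_add_card_le hiso hΛ S T
  have hpairs := card_conflict S T
  have hg : gF n Λ (S ∩ T) + gF n Λ (sqcup n S T) ≤ gF n Λ S + gF n Λ T := by
    simp only [gF_eq hΛ]
    lia
  beta_reduce
  exact_mod_cast hg

end Bisubmodular

section ExtremePoints

open Filter Topology

variable {E ι : Type*} [AddCommGroup E] [Module ℝ E] [Finite ι]

theorem eventually_add_smul_forall_le {a : ι → Module.Dual ℝ E} {b : ι → ℝ} {x d : E}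
    (hx : ∀ i, a i x ≤ b i) (hd : ∀ i, a i x = b i → a i d = 0) :
    ∀ᶠ ε in 𝓝 (0 : ℝ), ∀ i, a i (x + ε • d) ≤ b i := by
  simp only [map_add, map_smul, smul_eq_mul]
  refine eventually_all.2 fun i => ?_
  obtain htight | hslack := (hx i).eq_or_lt
  · exact .of_forall fun ε => by rw [hd i htight, mul_zero, add_zero, htight]
  · have hcont : Continuous fun ε : ℝ => a i x + ε * a i d := by fun_prop
    have hlim := hcont.tendsto 0
    rw [zero_mul, add_zero] at hlim
    exact hlim.eventually_le_const hslack

theorem eq_zero_of_mem_extremePoints {a : ι → Module.Dual ℝ E} {b : ι → ℝ} {x d : E}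
    (hx : x ∈ Set.extremePoints ℝ {y | ∀ i, a i y ≤ b i}) (hd : ∀ i, a i x = b i → a i d = 0) :
    d = 0 := by
  have hplus := eventually_add_smul_forall_le hx.1 hd
  have hminus := eventually_add_smul_forall_le (d := -d) hx.1 (by simpa using hd)
  obtain ⟨ε, ⟨hεplus, hεminus⟩, hε : 0 < ε⟩ :=
    (((hplus.and hminus).filter_mono nhdsWithin_le_nhds).and
      (self_mem_nhdsWithin (s := Set.Ioi (0 : ℝ)))).exists
  have hseg : x ∈ openSegment ℝ (x + ε • d) (x + ε • -d) :=
    ⟨1 / 2, 1 / 2, by norm_num, by norm_num, by norm_num, by module⟩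
  have heq : x + ε • d = x := hx.2 hεplus hεminus hseg
  exact (smul_eq_zero.1 (add_eq_left.1 heq)).resolve_left hε.ne'

end ExtremePoints

section SeparatingSublattice

variable {α : Type*} [DecidableEq α] {𝓕 : Set (Finset α)} {A T : Finset α}

theorem exists_insert_mem_of_pairwise_separated (h𝓕 : IsSublattice 𝓕) (hT : T ∈ 𝓕)
    (hsep : (T : Set α).Pairwise fun p q => ∃ S ∈ 𝓕, ¬(p ∈ S ↔ q ∈ S)) (hA : A ∈ 𝓕)
    (hAT : A ⊂ T) : ∃ a ∉ A, insert a A ∈ 𝓕 ∧ insert a A ⊆ T := by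
  obtain ⟨B, ⟨hB, hAB, hBT⟩, hmin⟩ :=
    exists_minimal_of_wellFoundedLT (fun B => B ∈ 𝓕 ∧ A ⊂ B ∧ B ⊆ T) ⟨T, hT, hAT, subset_rfl⟩
  have hblock : ∀ S ∈ 𝓕, ∀ p ∈ B, p ∉ A → p ∈ S → ∀ q ∈ B, q ∉ A → q ∈ S := by
    intro S hS p hpB hpA hpS q hqB hqA
    have hsub : A ∪ S ∩ B ⊆ B := Finset.union_subset hAB.subset Finset.inter_subset_right
    have hp : p ∈ A ∪ S ∩ B := by simp [hpS, hpB]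
    have hlt : A ⊂ A ∪ S ∩ B :=
      Finset.ssubset_iff_subset_ne.2 ⟨Finset.subset_union_left, fun h => hpA (h ▸ hp)⟩
    have hq := hmin ⟨h𝓕.supClosed hA (h𝓕.infClosed hS hB), hlt, hsub.trans hBT⟩ hsub hqB
    simpa [hqA, hqB] using hq
  obtain ⟨p, hpB, hpA⟩ := Finset.exists_of_ssubset hAB
  have hBp : B = insert p A := by
    refine (Finset.insert_subset hpB hAB.subset).antisymm' fun q hqB => ?_
    by_contra hq
    obtain ⟨hqp, hqA⟩ : q ≠ p ∧ q ∉ A := by simpa using hq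
    obtain ⟨S, hS, hpq⟩ := hsep (hBT hpB) (hBT hqB) hqp.symm
    exact hpq ⟨fun h => hblock S hS p hpB hpA h q hqB hqA,
      fun h => hblock S hS q hqB hqA h p hpB hpA⟩
  exact ⟨p, hpA, hBp ▸ hB, hBp ▸ hBT⟩

theorem exists_strictMono_card_eq_of_pairwise_separated {n : ℕ} (h𝓕 : IsSublattice 𝓕)
    (hempty : ∅ ∈ 𝓕) (hT : T ∈ 𝓕) (hn : T.card = n)
    (hsep : (T : Set α).Pairwise fun p q => ∃ S ∈ 𝓕, ¬(p ∈ S ↔ q ∈ S)) :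
    ∃ S : Fin n → Finset α, StrictMono S ∧ ∀ j, S j ∈ 𝓕 ∧ (S j).card = j + 1 := by
  subst hn
  have hstep : ∀ A : {A // A ∈ 𝓕 ∧ A ⊆ T}, ∃ B : {B // B ∈ 𝓕 ∧ B ⊆ T},
      A ≤ B ∧ (A.1.card < T.card → B.1.card = A.1.card + 1) := by
    rintro ⟨A, hA, hAT⟩
    obtain rfl | hAT := hAT.eq_or_ssubset
    · exact ⟨⟨A, hA, subset_rfl⟩, le_rfl, fun h => absurd h (lt_irrefl _)⟩
    · obtain ⟨a, haA, hmem, hsub⟩ := exists_insert_mem_of_pairwise_separated h𝓕 hT hsep hA hAT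
      exact ⟨⟨insert a A, hmem, hsub⟩, Finset.subset_insert a A,
        fun _ => Finset.card_insert_of_notMem haA⟩
  choose next hle hcard using hstep
  let S : ℕ → {A // A ∈ 𝓕 ∧ A ⊆ T} := fun k => next^[k] ⟨∅, hempty, T.empty_subset⟩
  have hsucc : ∀ k, S (k + 1) = next (S k) := fun k => Function.iterate_succ_apply' ..
  have hmono : Monotone S := monotone_nat_of_le_succ fun k => hsucc k ▸ hle _
  have hcardS : ∀ k ≤ T.card, (S k).1.card = k := by
    intro k hk
    induction k with
    | zero => rfl
    | succ k ih => rw [hsucc, hcard _ (by lia), ih (by lia)]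
  refine ⟨fun j => (S (j + 1)).1, fun i j hij => ?_, fun j => ⟨(S _).2.1, hcardS _ j.2⟩⟩
  refine lt_of_le_of_ne (hmono (Nat.succ_le_succ hij.le)) fun heq => hij.ne (Fin.ext ?_)
  have hcards := congrArg Finset.card heq
  rw [hcardS _ i.2, hcardS _ j.2] at hcards
  exact Nat.succ_injective hcards

end SeparatingSublattice

section TightSets

variable {n : ℕ} {f : Finset (Fin n × Bool) → ℝ} {x : Fin n → ℝ} {S T : Finset (Fin n × Bool)}

/-- The polyhedron of a function `f` on the admissible sets; for `f = g_Λ` it is `𝒫(Λ)`. -/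
def signedPolyhedron (f : Finset (Fin n × Bool) → ℝ) : Set (Fin n → ℝ) :=
  {x | ∀ S, Admissible n S → xval n x S ≤ f S}

/-- An admissible set whose inequality in the polyhedron of `f` holds with equality at `x`. -/
structure IsTight (f : Finset (Fin n × Bool) → ℝ) (x : Fin n → ℝ) (S : Finset (Fin n × Bool)) :
    Prop where
  admissible : Admissible n S
  xval_eq : xval n x S = f S

theorem isTight_empty (hf : f ∅ = 0) (x : Fin n → ℝ) : IsTight f x ∅ :=
  ⟨fun q => by simp, by simp [xval, hf]⟩

theorem IsTight.inter_and_sqcup (hf : IsBisubmodular f) (hx : x ∈ signedPolyhedron f)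
    (hS : IsTight f x S) (hT : IsTight f x T) :
    IsTight f x (S ∩ T) ∧ IsTight f x (sqcup n S T) := by
  have hinter : Admissible n (S ∩ T) := hS.admissible.mono Finset.inter_subset_left
  have hsqcup := admissible_sqcup S T
  have hle := hx _ hinter
  have hle' := hx _ hsqcup
  have hbisub := hf S T hS.admissible hT.admissible
  have hmodular := xval_inter_add_xval_sqcup x S T
  rw [hS.xval_eq, hT.xval_eq] at hmodular
  exact ⟨⟨hinter, by linarith⟩, ⟨hsqcup, by linarith⟩⟩

theorem IsTight.inter (hf : IsBisubmodular f) (hx : x ∈ signedPolyhedron f)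
    (hS : IsTight f x S) (hT : IsTight f x T) : IsTight f x (S ∩ T) :=
  (hS.inter_and_sqcup hf hx hT).1

theorem IsTight.sqcup (hf : IsBisubmodular f) (hx : x ∈ signedPolyhedron f)
    (hS : IsTight f x S) (hT : IsTight f x T) : IsTight f x (sqcup n S T) :=
  (hS.inter_and_sqcup hf hx hT).2

theorem isSublattice_isTight_subset (hf : IsBisubmodular f) (hx : x ∈ signedPolyhedron f)
    (hT : Admissible n T) : IsSublattice {S | IsTight f x S ∧ S ⊆ T} where
  supClosed A hA B hB := by
    have hAB : A ∪ B ⊆ T := Finset.union_subset hA.2 hB.2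
    have htight := hA.1.sqcup hf hx hB.1
    rw [sqcup_eq_union (hT.mono hAB)] at htight
    exact ⟨htight, hAB⟩
  infClosed _ hA _ hB := ⟨hA.1.inter hf hx hB.1, Finset.inter_subset_left.trans hA.2⟩

theorem eq_zero_of_forall_isTight (hx : x ∈ Set.extremePoints ℝ (signedPolyhedron f))
    {d : Fin n → ℝ} (hd : ∀ S, IsTight f x S → xval n d S = 0) : d = 0 := by
  have hpoly : signedPolyhedron f =
      {y | ∀ S : {S // Admissible n S}, xvalDual S.1 y ≤ f S.1} := by
    ext y
    exact ⟨fun h S => h S.1 S.2, fun h S hS => h ⟨S, hS⟩⟩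
  rw [hpoly] at hx
  exact eq_zero_of_mem_extremePoints hx fun S hS => hd S.1 ⟨S.2, hS⟩

-- A direction vanishing on the tight subsets of `T` vanishes on every tight `S`, because
-- `d(S) = d(S ∩ T) + d(S ⊔ T) - d(T)` and `S ⊔ T ⊆ T`.
theorem eq_zero_of_forall_isTight_subset (hf : IsBisubmodular f)
    (hx : x ∈ Set.extremePoints ℝ (signedPolyhedron f)) (hT : IsTight f x T)
    (hfull : ∀ q, ∃ b, (q, b) ∈ T) {d : Fin n → ℝ}
    (hd : ∀ S, IsTight f x S → S ⊆ T → xval n d S = 0) : d = 0 := by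
  refine eq_zero_of_forall_isTight hx fun S hS => ?_
  have hmodular := xval_inter_add_xval_sqcup d S T
  rw [hd _ (hS.inter hf hx.1 hT) Finset.inter_subset_right,
    hd _ (hS.sqcup hf hx.1 hT) (sqcup_subset_of_full hfull), hd T hT subset_rfl] at hmodular
  linarith

theorem exists_isTight_full (hf : IsBisubmodular f) (hempty : f ∅ = 0)
    (hx : x ∈ Set.extremePoints ℝ (signedPolyhedron f)) :
    ∃ T, IsTight f x T ∧ ∀ q, ∃ b, (q, b) ∈ T := by
  obtain ⟨T, hT, hmax⟩ := exists_maximal_of_wellFoundedGT (IsTight f x) ⟨∅, isTight_empty hempty x⟩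
  refine ⟨T, hT, ?_⟩
  by_contra! hfull
  obtain ⟨q, hq⟩ := hfull
  have hsupport : ∀ S, IsTight f x S → ∀ b, (q, b) ∉ S := by
    intro S hS b hb
    have hsub := insert_subset_sqcup_sqcup hS.admissible hT.admissible hb hq
    have htight := hT.sqcup hf hx.1 (hS.sqcup hf hx.1 hT)
    exact hq b (hmax htight ((Finset.subset_insert _ _).trans hsub)
      (hsub (Finset.mem_insert_self _ _)))
  have hzero : (Pi.single q 1 : Fin n → ℝ) = 0 := by
    refine eq_zero_of_forall_isTight hx fun S hS => ?_
    rw [xval_eq_sum]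
    refine Finset.sum_eq_zero fun p hp => ?_
    have hpq : p.1 ≠ q := fun h => hsupport S hS p.2 (h ▸ hp)
    simp [signedCoord, hpq]
  exact one_ne_zero (Pi.single_eq_zero_iff.1 hzero)

-- Otherwise the direction with signed coordinate `1` at `p`, `-1` at `q` and `0` elsewhere on `T`
-- would vanish on all tight subsets of `T`.
theorem IsTight.pairwise_separated (hf : IsBisubmodular f)
    (hx : x ∈ Set.extremePoints ℝ (signedPolyhedron f)) (hT : IsTight f x T)
    (hfull : ∀ q, ∃ b, (q, b) ∈ T) :
    (T : Set (Fin n × Bool)).Pairwise fun p q =>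
      ∃ S ∈ {S | IsTight f x S ∧ S ⊆ T}, ¬(p ∈ S ↔ q ∈ S) := by
  intro p hp q _ hpq
  by_contra! hno
  obtain ⟨d, hd⟩ := hT.admissible.exists_signedCoord_eq (Pi.single p 1 - Pi.single q 1)
  have hzero : d = 0 := by
    refine eq_zero_of_forall_isTight_subset hf hx hT hfull fun S hS hST => ?_
    rw [xval_eq_sum, Finset.sum_congr rfl fun s hs => hd s (hST hs)]
    simp [Finset.sum_sub_distrib, Finset.sum_pi_single', hno S ⟨hS, hST⟩]
  have hdp := hd p hp
  simp [hzero, signedCoord, hpq] at hdp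

theorem exists_strictMono_isTight (hf : IsBisubmodular f) (hempty : f ∅ = 0)
    (hx : x ∈ Set.extremePoints ℝ (signedPolyhedron f)) :
    ∃ S : Fin n → Finset (Fin n × Bool), StrictMono S ∧
      ∀ j, IsTight f x (S j) ∧ (S j).card = j + 1 := by
  obtain ⟨T, hT, hfull⟩ := exists_isTight_full hf hempty hx
  obtain ⟨S, hmono, hS⟩ := exists_strictMono_card_eq_of_pairwise_separated
    (isSublattice_isTight_subset hf hx.1 hT.admissible)
    ⟨isTight_empty hempty x, T.empty_subset⟩ ⟨hT, subset_rfl⟩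
    (card_eq_of_full hT.admissible hfull) (hT.pairwise_separated hf hx hfull)
  exact ⟨S, hmono, fun j => ⟨(hS j).1.1, (hS j).2⟩⟩

end TightSets

theorem stmt10 (n : ℕ) (hn : 2 ≤ n)
    (Λ : Submodule ℂ (Idx n → ℂ)) (hiso : IsIsotropic n Λ)
    (hΛ : Module.finrank ℂ ↥Λ = n)
    (x : Fin n → ℝ) (hx : x ∈ Set.extremePoints ℝ (polytopeP n Λ)) :
    ∃ S : Fin n → Finset (Fin n × Bool), StrictMono S ∧
      (∀ j, Admissible n (S j)) ∧ (∀ j, (S j).card = (j : ℕ) + 1) ∧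
      (∀ j, xval n x (S j) = (gF n Λ (S j) : ℝ)) := by
  have hempty : (gF n Λ ∅ : ℝ) = 0 := by rw [gF_empty hΛ, Int.cast_zero]
  obtain ⟨S, hmono, hS⟩ := exists_strictMono_isTight (isBisubmodular_gF hiso hΛ) hempty hx
  exact ⟨S, hmono, fun j => (hS j).1.admissible, fun j => (hS j).2, fun j => (hS j).1.xval_eq⟩
end
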